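/- Let w be the unique radial positive solution of Δw − w + w³ = 0 in ℝ², let ψ₂ = −(1/2)(w + x·∇w), and let ψ₄ ∈ C²(ℝ²)∩L^∞(ℝ²) be the unique solution of ∇ψ₄(0) = 0 and (−Δ+1−3w²)ψ₄ = 3wψ₂² + ψ₂ in ℝ². Then ∫_{ℝ²}(2wψ₄ + ψ₂²) = 0. -/

import Mathlib

noncomputable section
open MeasureTheory Filter Real Set
open scoped RealInnerProductSpace Topology

abbrev R2 : Type := EuclideanSpace ℝ (Fin 2)

/-- The Laplacian of `f : ℝ² → ℝ`. -/
def lap (f : R2 → ℝ) (x : R2) : ℝ :=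
  ∑ i : Fin 2, fderiv ℝ (fun y => fderiv ℝ f y (EuclideanSpace.single i 1)) x
    (EuclideanSpace.single i 1)

/-- The linearized operator `L = -Δ + (1 - 3 w²)` applied to `f`. -/
def Lop (w f : R2 → ℝ) (x : R2) : ℝ := -lap f x + (1 - 3 * (w x) ^ 2) * f x

/-- `x · ∇f`. -/
def xgrad (f : R2 → ℝ) (x : R2) : ℝ := ⟪x, gradient f x⟫

/-- First partial derivative `∂f/∂x₁`. -/
def pd1 (f : R2 → ℝ) (x : R2) : ℝ := fderiv ℝ f x (EuclideanSpace.single 0 1)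

/-- `w` is the (radial positive) ground state of `Δw - w + w³ = 0` in `ℝ²`, `w ∈ H¹`. -/
structure IsGroundState (w : R2 → ℝ) : Prop where
  smooth : ContDiff ℝ 2 w
  pos : ∀ x, 0 < w x
  radial : ∀ x y : R2, ‖x‖ = ‖y‖ → w x = w y
  eqn : ∀ x, lap w x - w x + (w x) ^ 3 = 0
  sqInt : Integrable fun x => (w x) ^ 2
  quarticInt : Integrable fun x => (w x) ^ 4
  gradSqInt : Integrable fun x => ‖gradient w x‖ ^ 2

/-- `h` is homogeneous of degree `p`. -/
def Homog (h : R2 → ℝ) (p : ℝ) : Prop :=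
  ∀ t : ℝ, 0 < t → ∀ x : R2, h (t • x) = t ^ p * h x

/-- `H(y) = ∫ h(x+y) w(x)² dx`. -/
def Hfun (h w : R2 → ℝ) (y : R2) : ℝ := ∫ x, h (x + y) * (w x) ^ 2

/-- Determinant of the Hessian of `H` at `y`. -/
def hessDet (H : R2 → ℝ) (y : R2) : ℝ :=
  (fderiv ℝ (fun z => fderiv ℝ H z (EuclideanSpace.single 0 1)) y (EuclideanSpace.single 0 1)) *
    (fderiv ℝ (fun z => fderiv ℝ H z (EuclideanSpace.single 1 1)) y (EuclideanSpace.single 1 1)) -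
  (fderiv ℝ (fun z => fderiv ℝ H z (EuclideanSpace.single 0 1)) y (EuclideanSpace.single 1 1)) *
    (fderiv ℝ (fun z => fderiv ℝ H z (EuclideanSpace.single 1 1)) y (EuclideanSpace.single 0 1))

/-- The Gross–Pitaevskii energy functional. -/
def GPe (V : R2 → ℝ) (a : ℝ) (u : R2 → ℝ) : ℝ :=
  (∫ x, ‖gradient u x‖ ^ 2) + (∫ x, V x * (u x) ^ 2) - a / 2 * ∫ x, (u x) ^ 4

/-- Admissible class: `u ∈ H¹`, `∫ V u² < ∞`, `‖u‖₂ = 1`. -/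
def Admissible (V : R2 → ℝ) (u : R2 → ℝ) : Prop :=
  Integrable (fun x => (u x) ^ 2) ∧ Integrable (fun x => ‖gradient u x‖ ^ 2) ∧
    Integrable (fun x => V x * (u x) ^ 2) ∧ (∫ x, (u x) ^ 2) = 1

/-- `e(a)`, the ground state energy. -/
def gpInf (V : R2 → ℝ) (a : ℝ) : ℝ := sInf (GPe V a '' {u | Admissible V u})

/-- `u` is a positive minimizer of `e(a)`. -/
def IsPosMinimizer (V : R2 → ℝ) (a : ℝ) (u : R2 → ℝ) : Prop :=
  Admissible V u ∧ GPe V a u = gpInf V a ∧ ∀ x, 0 < u x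

/-- `x0` is the unique maximum point of `u`. -/
def IsUniqueMaxPt (u : R2 → ℝ) (x0 : R2) : Prop :=
  IsMaxOn u univ x0 ∧ ∀ z, IsMaxOn u univ z → z = x0

/-- The Lagrange multiplier `μ_a = e(a) - (a/2)∫u⁴`. -/
def lagrangeMul (V : R2 → ℝ) (a : ℝ) (u : R2 → ℝ) : ℝ :=
  gpInf V a - a / 2 * ∫ x, (u x) ^ 4

/-- A bounded function on `ℝ²`. -/
def BddFun (f : R2 → ℝ) : Prop := ∃ M, ∀ x, |f x| ≤ M

/-!
For `s > 0` the function `u_s(x) = √s w(√s x)` solves `Δu - s u + u³ = 0`, and in the plane its mass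
`∫ u_s²` does not depend on `s`. Differentiating twice at `s = 1`, the function `ψ₂ = -∂ₛu`
satisfies `Lψ₂ = w`, the function `ψ₄* = ½ ∂ₛ²u` satisfies the equation of `ψ₄`, and the second
derivative of the mass gives `∫ (2wψ₄* + ψ₂²) = 0`. Since `L` is symmetric,
`∫ wψ₄ = ∫ (Lψ₂)ψ₄ = ∫ ψ₂(Lψ₄)` depends on `ψ₄` only through the right-hand side of its equation, so
`ψ₄` may be replaced by `ψ₄*`. The integrations by parts are justified by the exponential decay of
`w` and `∇w`, a comparison argument for the radial profile.
-/

open Module InnerProductSpace Laplacian Gradient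

section NormedSpace

variable {E : Type*} [NormedAddCommGroup E] [NormedSpace ℝ E] {f : E → ℝ}

lemma contDiff_fderiv_apply (hf : ContDiff ℝ 2 f) (v : E) :
    ContDiff ℝ 1 fun y => fderiv ℝ f y v :=
  (hf.fderiv_right le_rfl).clm_apply contDiff_const

lemma continuous_fderiv_fderiv_apply (hf : ContDiff ℝ 2 f) (v : E) :
    Continuous fun x => fderiv ℝ (fun y => fderiv ℝ f y v) x v :=
  ((contDiff_fderiv_apply hf v).continuous_fderiv one_ne_zero).clm_apply continuous_const

lemma hasDerivAt_comp_smul_const (hf : Differentiable ℝ f) (v : E) (t : ℝ) :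
    HasDerivAt (fun s : ℝ => f (s • v)) (fderiv ℝ f (t • v) v) t := by
  have h := (hf (t • v)).hasFDerivAt.comp_hasDerivAt t ((hasDerivAt_id t).smul_const v)
  rwa [one_smul] at h

lemma hasFDerivAt_sub_pow_three {x : E} (hf : DifferentiableAt ℝ f x) :
    HasFDerivAt (fun y => f y - f y ^ 3) ((1 - 3 * f x ^ 2) • fderiv ℝ f x) x := by
  refine (hf.hasFDerivAt.sub (hf.hasFDerivAt.pow 3)).congr_fderiv ?_
  ext v
  simp only [Nat.add_one_sub_one, nsmul_eq_mul, Nat.cast_ofNat, sub_apply, smul_apply, smul_eq_mul]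
  ring

end NormedSpace

section Laplacian

variable {E ι : Type*} [NormedAddCommGroup E] [InnerProductSpace ℝ E]

lemma contDiff_two_of_hasFDerivAt_smul_innerSL {f g : E → ℝ}
    (hf : ∀ y, HasFDerivAt f (g y • innerSL ℝ y) y) (hg : ContDiff ℝ 1 g) : ContDiff ℝ 2 f := by
  refine (contDiff_succ_iff_hasFDerivAt (n := 1)).2 ⟨fun y => g y • innerSL ℝ y, ?_, hf⟩
  exact hg.smul (innerSL ℝ).contDiff

variable [Fintype ι]

lemma sum_inner_mul_apply (b : OrthonormalBasis ι ℝ E) (φ : E →L[ℝ] ℝ) (v : E) :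
    ∑ i, ⟪b i, v⟫ * φ (b i) = φ v := by
  conv_rhs => rw [← b.sum_repr' v, map_sum]
  simp only [map_smul, smul_eq_mul]

variable [FiniteDimensional ℝ E] {f g : E → ℝ} {x : E}

lemma laplacian_eq_sum_fderiv_fderiv (b : OrthonormalBasis ι ℝ E) (hf : ContDiff ℝ 2 f) :
    Δ f x = ∑ i, fderiv ℝ (fun y => fderiv ℝ f y (b i)) x (b i) := by
  have hf' : DifferentiableAt ℝ (fderiv ℝ f) x :=
    (hf.fderiv_right (m := 1) le_rfl).differentiable one_ne_zero x
  simp [laplacian_eq_iteratedFDeriv_orthonormalBasis f b, iteratedFDeriv_two_apply,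
    fderiv_clm_apply hf' (differentiableAt_const _)]

lemma continuous_laplacian (hf : ContDiff ℝ 2 f) : Continuous (Δ f) := by
  have b := stdOrthonormalBasis ℝ E
  have laplacian_eq : Δ f = fun x => ∑ i, fderiv ℝ (fun y => fderiv ℝ f y (b i)) x (b i) :=
    funext fun x => laplacian_eq_sum_fderiv_fderiv b hf
  rw [laplacian_eq]
  exact continuous_finsetSum _ fun i _ => continuous_fderiv_fderiv_apply hf (b i)

lemma hasCompactSupport_laplacian (hf : HasCompactSupport f) : HasCompactSupport (Δ f) := by
  refine HasCompactSupport.intro hf fun x hx => ?_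
  have locally_zero : f =ᶠ[𝓝 x] fun _ => 0 := notMem_tsupport_iff_eventuallyEq.1 hx
  simpa using (laplacian_congr_nhds locally_zero).eq_of_nhds

lemma norm_gradient_eq_norm_fderiv : ‖∇ f x‖ = ‖fderiv ℝ f x‖ :=
  (toDual ℝ E).symm.norm_map _

lemma sum_fderiv_mul_fderiv_eq_inner_gradient (b : OrthonormalBasis ι ℝ E) :
    ∑ i, fderiv ℝ f x (b i) * fderiv ℝ g x (b i) = ⟪∇ f x, ∇ g x⟫ := by
  simp_rw [← inner_gradient_left, real_inner_comm (b _) (∇ g x)]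
  exact b.sum_inner_mul_inner _ _

lemma laplacian_mul (hf : ContDiff ℝ 2 f) (hg : ContDiff ℝ 2 g) :
    Δ (fun y => f y * g y) x = f x * Δ g x + g x * Δ f x + 2 * ⟪∇ f x, ∇ g x⟫ := by
  have second_fderiv (v : E) : fderiv ℝ (fun y => fderiv ℝ (fun z => f z * g z) y v) x v =
      f x * fderiv ℝ (fun y => fderiv ℝ g y v) x v + g x * fderiv ℝ (fun y => fderiv ℝ f y v) x v
        + 2 * (fderiv ℝ f x v * fderiv ℝ g x v) := by
    have hdf : Differentiable ℝ f := hf.differentiable two_ne_zero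
    have hdg : Differentiable ℝ g := hg.differentiable two_ne_zero
    have hf' := (contDiff_fderiv_apply hf v).differentiable one_ne_zero
    have hg' := (contDiff_fderiv_apply hg v).differentiable one_ne_zero
    have first_fderiv : (fun y => fderiv ℝ (fun z => f z * g z) y v) =
        fun y => f y * fderiv ℝ g y v + g y * fderiv ℝ f y v := by
      funext y
      simp [fderiv_fun_mul (hdf y) (hdg y)]
    rw [first_fderiv, fderiv_fun_add ((hdf x).fun_mul (hg' x)) ((hdg x).fun_mul (hf' x)),
      fderiv_fun_mul (hdf x) (hg' x), fderiv_fun_mul (hdg x) (hf' x)]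
    simp only [add_apply, smul_apply, smul_eq_mul]
    ring
  have b := stdOrthonormalBasis ℝ E
  simp only [laplacian_eq_sum_fderiv_fderiv b (hf.mul hg), laplacian_eq_sum_fderiv_fderiv b hf,
    laplacian_eq_sum_fderiv_fderiv b hg, ← sum_fderiv_mul_fderiv_eq_inner_gradient b, second_fderiv,
    Finset.sum_add_distrib, Finset.mul_sum]

lemma laplacian_comp_smul (hf : ContDiff ℝ 2 f) (c : ℝ) (x : E) :
    Δ (fun y => f (c • y)) x = c ^ 2 * Δ f (c • x) := by
  simp [laplacian_eq_iteratedFDeriv_stdOrthonormalBasis, iteratedFDeriv_comp_const_smul c hf,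
    Finset.mul_sum]

lemma laplacian_of_hasFDerivAt_smul_innerSL
    (hf : ∀ y, HasFDerivAt f (g y • innerSL ℝ y) y) (hg : ContDiff ℝ 1 g) :
    Δ f x = fderiv ℝ g x x + finrank ℝ E * g x := by
  have b := stdOrthonormalBasis ℝ E
  have second_fderiv (v : E) (hv : ‖v‖ = 1) :
      fderiv ℝ (fun y => fderiv ℝ f y v) x v = ⟪v, x⟫ * fderiv ℝ g x v + g x := by
    have first_fderiv : (fun y => fderiv ℝ f y v) = fun y => g y * innerSL ℝ v y := by
      funext y
      simp [(hf y).fderiv, real_inner_comm]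
    have hg' := (hg.differentiable one_ne_zero x).hasFDerivAt
    rw [first_fderiv, (hg'.fun_mul (innerSL ℝ v).hasFDerivAt).fderiv]
    simp [hv, add_comm]
  rw [laplacian_eq_sum_fderiv_fderiv b (contDiff_two_of_hasFDerivAt_smul_innerSL hf hg),
    Finset.sum_congr rfl fun i _ => second_fderiv (b i) (b.orthonormal.1 i),
    Finset.sum_add_distrib, sum_inner_mul_apply]
  simp

end Laplacian

/-! ### Radial functions -/

/-- A function is radial if its value depends only on the norm of its argument. -/
def IsRadial {E F : Type*} [Norm E] (f : E → F) : Prop :=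
  ∀ x y, ‖x‖ = ‖y‖ → f x = f y

namespace IsRadial

variable {E : Type*} [NormedAddCommGroup E] [InnerProductSpace ℝ E] {f : E → ℝ}

lemma fderiv_apply_eq_zero (hf : IsRadial f) (hfd : Differentiable ℝ f) {x v : E}
    (hxv : ⟪x, v⟫ = 0) : fderiv ℝ f x v = 0 := by
  have deriv_line (u : E) : HasDerivAt (fun t : ℝ => f (x + t • u)) (fderiv ℝ f x u) 0 :=
    (hfd x).hasFDerivAt.hasLineDerivAt u
  have even_line : (fun t : ℝ => f (x + t • v)) = fun t => f (x + t • (-v)) := by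
    funext t
    refine hf _ _ ?_
    rw [smul_neg, ← sub_eq_add_neg]
    have orthogonal : ⟪t • v, x⟫ = 0 := by
      rw [real_inner_smul_left, real_inner_comm, hxv, mul_zero]
    exact (norm_sub_eq_norm_add (𝕜 := ℝ) orthogonal).symm
  have h := (even_line ▸ deriv_line v).unique (deriv_line (-v))
  rw [map_neg] at h
  linarith

lemma inner_mul_fderiv_apply (hf : IsRadial f) (hfd : Differentiable ℝ f) (x u v : E) :
    ⟪x, u⟫ * fderiv ℝ f x v = ⟪x, v⟫ * fderiv ℝ f x u := by
  have h := hf.fderiv_apply_eq_zero hfd (x := x) (v := ⟪x, u⟫ • v - ⟪x, v⟫ • u) (by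
    simp only [inner_sub_right, inner_smul_right]; ring)
  simpa [sub_eq_zero] using h

lemma norm_mul_norm_fderiv (hf : IsRadial f) (hfd : Differentiable ℝ f) (x : E) :
    ‖x‖ * ‖fderiv ℝ f x‖ = |fderiv ℝ f x x| := by
  rcases eq_or_ne x 0 with rfl | hx
  · simp
  have hx' : 0 < ‖x‖ := norm_pos_iff.2 hx
  refine le_antisymm ?_ ?_
  · rw [← le_div_iff₀' hx']
    refine ContinuousLinearMap.opNorm_le_bound _ (by positivity) fun v => ?_
    have h := congrArg abs (hf.inner_mul_fderiv_apply hfd x x v)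
    rw [real_inner_self_eq_norm_sq, abs_mul, abs_mul, abs_of_nonneg (by positivity)] at h
    have cauchy_schwarz := mul_le_mul_of_nonneg_right (abs_real_inner_le_norm x v)
      (abs_nonneg (fderiv ℝ f x x))
    rw [Real.norm_eq_abs, div_mul_eq_mul_div, le_div_iff₀ hx']
    refine le_of_mul_le_mul_left ?_ hx'
    linarith
  · rw [mul_comm]
    exact (fderiv ℝ f x).le_opNorm x

lemma fderiv_apply_self (hf : IsRadial f) (hfd : Differentiable ℝ f) :
    IsRadial fun x => fderiv ℝ f x x := by
  intro x y hxy
  have deriv_ray (z : E) : HasDerivAt (fun t : ℝ => f (t • z)) (fderiv ℝ f z z) 1 := by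
    simpa only [one_smul] using hasDerivAt_comp_smul_const hfd z 1
  have same_ray : (fun t : ℝ => f (t • x)) = fun t => f (t • y) :=
    funext fun t => hf _ _ (by rw [norm_smul, norm_smul, hxy])
  exact (same_ray ▸ deriv_ray x).unique (deriv_ray y)

variable [FiniteDimensional ℝ E]

lemma fderiv_fderiv_apply_self (hf : IsRadial f) (hfs : ContDiff ℝ 2 f) (x v : E) :
    fderiv ℝ (fun y => fderiv ℝ f y v) x x =
      ⟪x, v⟫ * Δ f x - (finrank ℝ E - 1) * fderiv ℝ f x v := by
  -- Differentiate `⟪y, u⟫ * f'(y) v = ⟪y, v⟫ * f'(y) u` along `u`; then sum over a basis of `u`s.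
  have differentiated (u : E) :
      ⟪u, x⟫ * fderiv ℝ (fun y => fderiv ℝ f y v) x u + fderiv ℝ f x v * ‖u‖ ^ 2 =
        ⟪v, x⟫ * fderiv ℝ (fun y => fderiv ℝ f y u) x u + ⟪u, v⟫ * fderiv ℝ f x u := by
    have hf' (z : E) :=
      ((contDiff_fderiv_apply hfs z).differentiable one_ne_zero x).hasFDerivAt
    have wedge : (fun y => innerSL ℝ u y * fderiv ℝ f y v) =
        fun y => innerSL ℝ v y * fderiv ℝ f y u := by
      funext y
      simpa [real_inner_comm] using
        hf.inner_mul_fderiv_apply (hfs.differentiable two_ne_zero) y u v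
    have h := ((innerSL ℝ u).hasFDerivAt.fun_mul (hf' v)).unique
      (wedge ▸ (innerSL ℝ v).hasFDerivAt.fun_mul (hf' u))
    simpa [mul_comm, real_inner_comm] using DFunLike.congr_fun h u
  have b := stdOrthonormalBasis ℝ E
  have summed := Finset.sum_congr (rfl : Finset.univ = Finset.univ) fun i _ => differentiated (b i)
  simp only [Finset.sum_add_distrib, ← Finset.mul_sum, sum_inner_mul_apply,
    ← laplacian_eq_sum_fderiv_fderiv b hfs, b.orthonormal.1, one_pow, Finset.sum_const,
    Finset.card_univ, Fintype.card_fin, nsmul_eq_mul, mul_one, real_inner_comm x v] at summed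
  linarith

lemma hasFDerivAt_fderiv_apply_self (hf : IsRadial f) (hfs : ContDiff ℝ 2 f) (x : E) :
    HasFDerivAt (fun y => fderiv ℝ f y y)
      (Δ f x • innerSL ℝ x - ((finrank ℝ E : ℝ) - 2) • fderiv ℝ f x) x := by
  have hf' : DifferentiableAt ℝ (fderiv ℝ f) x :=
    (hfs.fderiv_right (m := 1) le_rfl).differentiable one_ne_zero x
  refine (hf'.hasFDerivAt.clm_apply (hasFDerivAt_id x)).congr_fderiv ?_
  refine ContinuousLinearMap.ext fun v => ?_
  have symmetric : fderiv ℝ (fderiv ℝ f) x v x = fderiv ℝ (fderiv ℝ f) x x v :=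
    (hfs.contDiffAt.isSymmSndFDerivAt (by simp)) v x
  have radial := hf.fderiv_fderiv_apply_self hfs x v
  rw [fderiv_clm_apply hf' (differentiableAt_const v)] at radial
  simp only [fderiv_fun_const, Pi.zero_apply, ContinuousLinearMap.comp_zero, zero_add,
    ContinuousLinearMap.flip_apply, ContinuousLinearMap.comp_id, id_eq, add_apply, sub_apply,
    smul_apply, coe_innerSL_apply, smul_eq_mul] at radial ⊢
  linarith

end IsRadial

/-! ### Green's identity without boundary terms -/

section IntegrationByParts

variable {E : Type*} [NormedAddCommGroup E] [InnerProductSpace ℝ E] [FiniteDimensional ℝ E]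
  [MeasurableSpace E] [BorelSpace E] {μ : Measure E} [μ.IsAddHaarMeasure] {u φ : E → ℝ}

lemma integral_fderiv_apply_self (hu : Differentiable ℝ u) (hui : Integrable u μ)
    (hxu : Integrable (fun x => ‖x‖ * u x) μ)
    (hxu' : Integrable (fun x => ‖x‖ * ‖fderiv ℝ u x‖) μ) :
    ∫ x, fderiv ℝ u x x ∂μ = -(finrank ℝ E * ∫ x, u x ∂μ) := by
  have b := stdOrthonormalBasis ℝ E
  have abs_inner_le (i) (x : E) : |⟪b i, x⟫| ≤ ‖x‖ := by
    simpa [b.orthonormal.1] using abs_real_inner_le_norm (b i) x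
  have integrable_inner_fderiv (i) :
      Integrable (fun x => innerSL ℝ (b i) x * fderiv ℝ u x (b i)) μ := by
    refine hxu'.mono' ((innerSL ℝ (b i)).continuous.measurable.mul
      (measurable_fderiv_apply_const ℝ u (b i))).aestronglyMeasurable (.of_forall fun x => ?_)
    rw [norm_mul]
    refine mul_le_mul (abs_inner_le i x) ?_ (norm_nonneg _) (norm_nonneg _)
    simpa [b.orthonormal.1] using (fderiv ℝ u x).le_opNorm (b i)
  have integrable_inner_mul (i) : Integrable (fun x => innerSL ℝ (b i) x * u x) μ := by
    refine hxu.mono ((innerSL ℝ (b i)).continuous.mul hu.continuous).aestronglyMeasurable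
      (.of_forall fun x => ?_)
    rw [norm_mul, norm_mul, norm_norm]
    exact mul_le_mul_of_nonneg_right (abs_inner_le i x) (norm_nonneg _)
  have by_parts (i) :
      ∫ x, innerSL ℝ (b i) x * fderiv ℝ u x (b i) ∂μ = -∫ x, u x ∂μ := by
    have fderiv_coord_mul (x : E) : fderiv ℝ (innerSL ℝ (b i)) x (b i) * u x = u x := by
      rw [ContinuousLinearMap.fderiv, innerSL_apply_apply, real_inner_self_eq_norm_sq,
        b.orthonormal.1, one_pow, one_mul]
    rw [integral_mul_fderiv_eq_neg_fderiv_mul_of_integrable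
      (by simpa only [fderiv_coord_mul] using hui) (integrable_inner_fderiv i)
      (integrable_inner_mul i) (fun x _ => (innerSL ℝ (b i)).differentiableAt) fun x _ => hu x]
    simp only [fderiv_coord_mul]
  calc ∫ x, fderiv ℝ u x x ∂μ
      = ∫ x, ∑ i, innerSL ℝ (b i) x * fderiv ℝ u x (b i) ∂μ := by
        simp_rw [innerSL_apply_apply, sum_inner_mul_apply]
    _ = ∑ i, ∫ x, innerSL ℝ (b i) x * fderiv ℝ u x (b i) ∂μ :=
        integral_finsetSum _ fun i _ => integrable_inner_fderiv i
    _ = -(finrank ℝ E * ∫ x, u x ∂μ) := by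
        simp only [by_parts, Finset.sum_const, Finset.card_univ, Fintype.card_fin, nsmul_eq_mul,
          mul_neg]

lemma integral_mul_fderiv_fderiv_of_hasCompactSupport (hu : ContDiff ℝ 2 u)
    (hus : HasCompactSupport u) (hφ : ContDiff ℝ 2 φ) (v : E) :
    ∫ x, u x * fderiv ℝ (fun y => fderiv ℝ φ y v) x v ∂μ =
      ∫ x, fderiv ℝ (fun y => fderiv ℝ u y v) x v * φ x ∂μ := by
  have hu' := contDiff_fderiv_apply hu v
  have hφ' := contDiff_fderiv_apply hφ v
  have hus' : HasCompactSupport fun x => fderiv ℝ u x v := hus.fderiv_apply ℝ v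
  have integrable_mul {f g : E → ℝ} (hf : Continuous f) (hg : Continuous g)
      (hfs : HasCompactSupport f) : Integrable (fun x => f x * g x) μ :=
    (hf.mul hg).integrable_of_hasCompactSupport hfs.mul_right
  have integrable_mid := integrable_mul hu'.continuous hφ'.continuous hus'
  rw [integral_mul_fderiv_eq_neg_fderiv_mul_of_integrable integrable_mid
      (integrable_mul hu.continuous (continuous_fderiv_fderiv_apply hφ v) hus)
      (integrable_mul hu.continuous hφ'.continuous hus)
      (fun x _ => hu.differentiable two_ne_zero x) (fun x _ => hφ'.differentiable one_ne_zero x),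
    integral_mul_fderiv_eq_neg_fderiv_mul_of_integrable
      (integrable_mul (continuous_fderiv_fderiv_apply hu v) hφ.continuous (hus'.fderiv_apply ℝ v))
      integrable_mid (integrable_mul hu'.continuous hφ.continuous hus')
      (fun x _ => hu'.differentiable one_ne_zero x) (fun x _ => hφ.differentiable two_ne_zero x),
    neg_neg]

lemma integral_mul_laplacian_of_hasCompactSupport (hu : ContDiff ℝ 2 u)
    (hus : HasCompactSupport u) (hφ : ContDiff ℝ 2 φ) :
    ∫ x, u x * Δ φ x ∂μ = ∫ x, Δ u x * φ x ∂μ := by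
  have b := stdOrthonormalBasis ℝ E
  have hus'' (v : E) : HasCompactSupport fun x => fderiv ℝ (fun y => fderiv ℝ u y v) x v :=
    (hus.fderiv_apply ℝ v).fderiv_apply ℝ v
  simp only [laplacian_eq_sum_fderiv_fderiv b hu, laplacian_eq_sum_fderiv_fderiv b hφ,
    Finset.mul_sum, Finset.sum_mul]
  rw [integral_finsetSum, integral_finsetSum]
  · exact Finset.sum_congr rfl fun i _ =>
      integral_mul_fderiv_fderiv_of_hasCompactSupport hu hus hφ (b i)
  · exact fun i _ => ((continuous_fderiv_fderiv_apply hu (b i)).mul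
      hφ.continuous).integrable_of_hasCompactSupport (hus'' (b i)).mul_right
  · exact fun i _ => (hu.continuous.mul
      (continuous_fderiv_fderiv_apply hφ (b i))).integrable_of_hasCompactSupport hus.mul_right

end IntegrationByParts

lemma exists_deriv_bound_comp_smul {E : Type*} [NormedAddCommGroup E] [InnerProductSpace ℝ E]
    [FiniteDimensional ℝ E] {η : E → ℝ} (hη : ContDiff ℝ 2 η) (hηs : HasCompactSupport η) :
    ∃ B, ∀ c ∈ Icc (0 : ℝ) 1, ∀ x,
      ‖∇ (fun y => η (c • y)) x‖ ≤ c * B ∧ ‖Δ (fun y => η (c • y)) x‖ ≤ c * B := by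
  obtain ⟨A, hA⟩ := (hηs.fderiv ℝ).exists_bound_of_continuous (hη.continuous_fderiv two_ne_zero)
  obtain ⟨B, hB⟩ := (hasCompactSupport_laplacian hηs).exists_bound_of_continuous
    (continuous_laplacian hη)
  refine ⟨max A B, fun c hc x => ⟨?_, ?_⟩⟩
  · rw [norm_gradient_eq_norm_fderiv, fderiv_comp_smul, norm_smul, Real.norm_of_nonneg hc.1]
    exact mul_le_mul_of_nonneg_left ((hA _).trans (le_max_left A B)) hc.1
  · rw [laplacian_comp_smul hη, norm_mul, Real.norm_of_nonneg (sq_nonneg c)]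
    exact mul_le_mul (pow_le_of_le_one hc.1 hc.2 two_ne_zero) ((hB _).trans (le_max_right A B))
      (norm_nonneg _) hc.1

/-- The smooth cutoff equal to `1` on the ball of radius `n + 1` and supported in the ball of radius
`2 (n + 1)`, obtained by rescaling a fixed bump function so that its derivatives are `O(1 / n)`. -/
def cutoff (E : Type*) [NormedAddCommGroup E] [InnerProductSpace ℝ E] [FiniteDimensional ℝ E]
    (n : ℕ) (x : E) : ℝ :=
  (⟨1, 2, one_pos, one_lt_two⟩ : ContDiffBump (0 : E)) ((n + 1 : ℝ)⁻¹ • x)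

namespace cutoff

variable (E : Type*) [NormedAddCommGroup E] [InnerProductSpace ℝ E] [FiniteDimensional ℝ E]

lemma contDiff (n : ℕ) : ContDiff ℝ 2 (cutoff E n) :=
  ContDiffBump.contDiff _ |>.comp (contDiff_const_smul _)

lemma hasCompactSupport (n : ℕ) : HasCompactSupport (cutoff E n) :=
  (ContDiffBump.hasCompactSupport _).comp_smul (by positivity)

lemma norm_le_one (n : ℕ) (x : E) : ‖cutoff E n x‖ ≤ 1 := by
  rw [cutoff, Real.norm_of_nonneg (ContDiffBump.nonneg _)]
  exact ContDiffBump.le_one _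

lemma tendsto_one (x : E) : Tendsto (fun n => cutoff E n x) atTop (𝓝 1) := by
  refine tendsto_const_nhds.congr' ?_
  filter_upwards [eventually_ge_atTop ⌈‖x‖⌉₊] with n hn
  refine (ContDiffBump.one_of_mem_closedBall _ ?_).symm
  have hxn : ‖x‖ ≤ n + 1 := (Nat.ceil_le.1 hn).trans (by linarith)
  rw [mem_closedBall_zero_iff, norm_smul, norm_inv, Real.norm_of_nonneg (by positivity)]
  exact inv_mul_le_one_of_le₀ hxn (by positivity)

lemma exists_deriv_bound : ∃ B, ∀ (n : ℕ) (x : E),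
    ‖∇ (cutoff E n) x‖ ≤ (n + 1 : ℝ)⁻¹ * B ∧ ‖Δ (cutoff E n) x‖ ≤ (n + 1 : ℝ)⁻¹ * B := by
  obtain ⟨B, hB⟩ := exists_deriv_bound_comp_smul (ContDiffBump.contDiff _)
    (⟨1, 2, one_pos, one_lt_two⟩ : ContDiffBump (0 : E)).hasCompactSupport
  exact ⟨B, fun n => hB _ ⟨by positivity, inv_le_one_of_one_le₀ (by simp)⟩⟩

end cutoff

section Green

variable {E : Type*} [NormedAddCommGroup E] [InnerProductSpace ℝ E] [FiniteDimensional ℝ E]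
  [MeasurableSpace E] [BorelSpace E] {μ : Measure E} {u φ : E → ℝ}

lemma tendsto_integral_cutoff_mul (hu : Integrable u μ) :
    Tendsto (fun n => ∫ x, cutoff E n x * u x ∂μ) atTop (𝓝 (∫ x, u x ∂μ)) := by
  refine tendsto_integral_of_dominated_convergence (fun x => ‖u x‖)
    (fun n => (cutoff.contDiff E n).continuous.aestronglyMeasurable.mul hu.aestronglyMeasurable)
    hu.norm (fun n => .of_forall fun x => ?_) (.of_forall fun x => ?_)
  · rw [norm_mul]
    exact mul_le_of_le_one_left (norm_nonneg _) (cutoff.norm_le_one E n x)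
  · simpa using (cutoff.tendsto_one E x).mul_const (u x)

variable [μ.IsAddHaarMeasure]

lemma integral_cutoff_mul_sub (hu : ContDiff ℝ 2 u) (hφ : ContDiff ℝ 2 φ) (n : ℕ) :
    ∫ x, cutoff E n x * (u x * Δ φ x - Δ u x * φ x) ∂μ =
      ∫ x, (u x * Δ (cutoff E n) x + 2 * ⟪∇ (cutoff E n) x, ∇ u x⟫) * φ x ∂μ := by
  have hχ := cutoff.contDiff E n
  have hχs := cutoff.hasCompactSupport E n
  have hχu : ContDiff ℝ 2 fun x => cutoff E n x * u x := hχ.mul hu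
  have hχus : HasCompactSupport fun x => cutoff E n x * u x := hχs.mul_right
  have green : ∫ x, cutoff E n x * u x * Δ φ x ∂μ =
      ∫ x, Δ (fun y => cutoff E n y * u y) x * φ x ∂μ :=
    integral_mul_laplacian_of_hasCompactSupport hχu hχus hφ
  have integrable_left : Integrable (fun x => cutoff E n x * u x * Δ φ x) μ :=
    (hχu.continuous.mul (continuous_laplacian hφ)).integrable_of_hasCompactSupport hχus.mul_right
  have integrable_right : Integrable (fun x => Δ (fun y => cutoff E n y * u y) x * φ x) μ :=
    ((continuous_laplacian hχu).mul hφ.continuous).integrable_of_hasCompactSupport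
      (hasCompactSupport_laplacian hχus).mul_right
  have integrable_diff : Integrable (fun x => cutoff E n x * (Δ u x * φ x)) μ :=
    (hχ.continuous.mul ((continuous_laplacian hu).mul
      hφ.continuous)).integrable_of_hasCompactSupport hχs.mul_right
  calc ∫ x, cutoff E n x * (u x * Δ φ x - Δ u x * φ x) ∂μ
      = ∫ x, (cutoff E n x * u x * Δ φ x - cutoff E n x * (Δ u x * φ x)) ∂μ := by
        congr with x; ring
    _ = ∫ x, (Δ (fun y => cutoff E n y * u y) x * φ x - cutoff E n x * (Δ u x * φ x)) ∂μ := by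
        rw [integral_sub integrable_left integrable_diff, green,
          integral_sub integrable_right integrable_diff]
    _ = _ := by
        congr with x
        rw [laplacian_mul hχ hu]
        ring

theorem integral_mul_laplacian_eq (hu : ContDiff ℝ 2 u) (hφ : ContDiff ℝ 2 φ)
    (huφ : Integrable (fun x => u x * φ x) μ) (hu'φ : Integrable (fun x => ‖∇ u x‖ * φ x) μ)
    (huφ'' : Integrable (fun x => u x * Δ φ x) μ) (hu''φ : Integrable (fun x => Δ u x * φ x) μ) :
    ∫ x, u x * Δ φ x ∂μ = ∫ x, Δ u x * φ x ∂μ := by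
  obtain ⟨B, hB⟩ := cutoff.exists_deriv_bound E
  have remainder_le (n : ℕ) (x : E) :
      ‖(u x * Δ (cutoff E n) x + 2 * ⟪∇ (cutoff E n) x, ∇ u x⟫) * φ x‖ ≤
        (n + 1 : ℝ)⁻¹ * (B * (‖u x * φ x‖ + 2 * ‖‖∇ u x‖ * φ x‖)) := by
    calc _ ≤ (‖u x‖ * ‖Δ (cutoff E n) x‖ + 2 * (‖∇ (cutoff E n) x‖ * ‖∇ u x‖)) * ‖φ x‖ := by
          rw [norm_mul]
          gcongr
          refine (norm_add_le _ _).trans ?_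
          rw [norm_mul, norm_mul, Real.norm_two]
          gcongr
          exact norm_inner_le_norm _ _
      _ ≤ (‖u x‖ * ((n + 1 : ℝ)⁻¹ * B) + 2 * ((n + 1 : ℝ)⁻¹ * B * ‖∇ u x‖)) * ‖φ x‖ := by
          gcongr
          exacts [(hB n x).2, (hB n x).1]
      _ = _ := by
          rw [norm_mul, norm_mul, norm_norm]
          ring
  have remainder_tendsto : Tendsto (fun n => ∫ x, (u x * Δ (cutoff E n) x +
      2 * ⟪∇ (cutoff E n) x, ∇ u x⟫) * φ x ∂μ) atTop (𝓝 0) := by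
    refine squeeze_zero_norm (fun n => norm_integral_le_of_norm_le
      (((huφ.norm.add (hu'φ.norm.const_mul 2)).const_mul B).const_mul _)
      (.of_forall (remainder_le n))) ?_
    simp_rw [integral_const_mul]
    simpa using (tendsto_inv_atTop_nhds_zero_nat (𝕜 := ℝ)).comp (tendsto_add_atTop_nat 1)
      |>.mul_const _
  have limit_eq_zero := tendsto_nhds_unique (tendsto_integral_cutoff_mul (huφ''.sub hu''φ))
    (remainder_tendsto.congr fun n => (integral_cutoff_mul_sub hu hφ n).symm)
  exact sub_eq_zero.1 ((integral_sub huφ'' hu''φ).symm.trans limit_eq_zero)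

end Green

/-! ### Rapid decay -/

section Decay

open Asymptotics

variable {E F : Type*} [NormedAddCommGroup E] [NormedAddCommGroup F]

/-- `f` decays faster than every power of `1 + ‖x‖`. -/
def RapidDecay (f : E → F) : Prop :=
  ∀ k : ℤ, f =O[⊤] fun x => (1 + ‖x‖) ^ k

/-- `f` is bounded by some power of `1 + ‖x‖`. Unlike `Function.HasTemperateGrowth`, nothing is
required of the derivatives of `f`. -/
def PolynomialGrowth (f : E → F) : Prop :=
  ∃ k : ℤ, f =O[⊤] fun x => (1 + ‖x‖) ^ k

variable {f g : E → F} {φ ψ : E → ℝ}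

lemma RapidDecay.of_isBigO {G : Type*} [NormedAddCommGroup G] {h : E → G} (hf : RapidDecay f)
    (hhf : h =O[⊤] f) : RapidDecay h :=
  fun k => hhf.trans (hf k)

lemma RapidDecay.add (hf : RapidDecay f) (hg : RapidDecay g) : RapidDecay fun x => f x + g x :=
  fun k => (hf k).add (hg k)

lemma RapidDecay.sub (hf : RapidDecay f) (hg : RapidDecay g) : RapidDecay fun x => f x - g x :=
  fun k => (hf k).sub (hg k)

lemma RapidDecay.norm (hf : RapidDecay f) : RapidDecay fun x => ‖f x‖ :=
  fun k => (hf k).norm_left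

lemma RapidDecay.polynomialGrowth (hf : RapidDecay f) : PolynomialGrowth f :=
  ⟨0, hf 0⟩

lemma PolynomialGrowth.norm (hf : PolynomialGrowth f) : PolynomialGrowth fun x => ‖f x‖ :=
  let ⟨k, hk⟩ := hf
  ⟨k, hk.norm_left⟩

lemma polynomialGrowth_const (c : F) : PolynomialGrowth fun _ : E => c :=
  ⟨0, by simpa using isBigO_const_const c (one_ne_zero (α := ℝ)) ⊤⟩

lemma polynomialGrowth_id : PolynomialGrowth fun x : E => x := by
  refine ⟨1, isBigO_of_le _ fun x => ?_⟩
  rw [zpow_one, Real.norm_of_nonneg (by positivity)]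
  linarith

lemma PolynomialGrowth.sub (hf : PolynomialGrowth f) (hg : PolynomialGrowth g) :
    PolynomialGrowth fun x => f x - g x := by
  obtain ⟨k, hk⟩ := hf
  obtain ⟨l, hl⟩ := hg
  have weight_mono {i j : ℤ} (hij : i ≤ j) :
      (fun x : E => (1 + ‖x‖) ^ i) =O[⊤] fun x => (1 + ‖x‖) ^ j := by
    refine isBigO_of_le _ fun x => ?_
    rw [Real.norm_of_nonneg (by positivity), Real.norm_of_nonneg (by positivity)]
    exact zpow_le_zpow_right₀ (by simp) hij
  exact ⟨max k l, (hk.trans (weight_mono (le_max_left k l))).sub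
    (hl.trans (weight_mono (le_max_right k l)))⟩

lemma isBigO_top_of_isBigO_cocompact {X G : Type*} [TopologicalSpace X] [NormedAddCommGroup G]
    {f : X → F} {g : X → G} (hf : Continuous f) (hg : Continuous g) (hg0 : ∀ x, g x ≠ 0)
    (hfg : f =O[cocompact X] g) : f =O[⊤] g := by
  obtain ⟨C, hC⟩ := hfg.bound
  obtain ⟨K, hK, hKC⟩ := mem_cocompact.1 hC
  have on_compact : f =O[𝓟 K] g :=
    (hf.continuousOn.isBigO_principal hK (c := (1 : ℝ)) (by simp)).trans
      (hg.continuousOn.isBigO_rev_principal hK (fun x _ => hg0 x) 1)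
  have off_compact : f =O[𝓟 Kᶜ] g := isBigO_principal.2 ⟨C, fun x hx => hKC hx⟩
  simpa using on_compact.sup off_compact

lemma rapidDecay_of_isBigO_exp_neg [ProperSpace E] (hf : Continuous f) {c : ℝ} (hc : 0 < c)
    (hfc : f =O[cocompact E] fun x => exp (-c * ‖x‖)) : RapidDecay f := by
  intro k
  have weight_continuous : Continuous fun x : E => (1 + ‖x‖) ^ k :=
    (by fun_prop : Continuous fun x : E => 1 + ‖x‖).zpow₀ k fun x => .inl (by positivity)
  refine isBigO_top_of_isBigO_cocompact hf weight_continuous (fun x => by positivity)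
    (hfc.trans ?_)
  have tendsto_weight : Tendsto (fun x : E => 1 + ‖x‖) (cocompact E) atTop :=
    tendsto_atTop_add_const_left _ 1 tendsto_norm_cocompact_atTop
  have h := ((isLittleO_exp_neg_mul_rpow_atTop hc k).comp_tendsto tendsto_weight).isBigO
    |>.const_mul_left (exp c)
  refine h.congr (fun x => ?_) fun x => Real.rpow_intCast _ k
  rw [Function.comp_apply, ← Real.exp_add]
  ring_nf

variable [NormedSpace ℝ F]

lemma PolynomialGrowth.smul_rapidDecay (hφ : PolynomialGrowth φ) (hf : RapidDecay f) :
    RapidDecay fun x => φ x • f x := by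
  obtain ⟨l, hl⟩ := hφ
  intro k
  refine (hl.smul (hf (k - l))).congr_right fun x => ?_
  rw [smul_eq_mul, ← zpow_add₀ (by positivity), add_sub_cancel]

lemma RapidDecay.apply_self [NormedSpace ℝ E] {A : E → E →L[ℝ] F} (hA : RapidDecay A) :
    RapidDecay fun x => A x x := by
  refine (polynomialGrowth_id.norm.smul_rapidDecay hA).of_isBigO (isBigO_of_le _ fun x => ?_)
  rw [norm_smul, norm_norm, mul_comm]
  exact (A x).le_opNorm x

lemma PolynomialGrowth.mul (hφ : PolynomialGrowth φ) (hψ : PolynomialGrowth ψ) :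
    PolynomialGrowth fun x => φ x * ψ x := by
  obtain ⟨k, hk⟩ := hφ
  obtain ⟨l, hl⟩ := hψ
  refine ⟨k + l, (hk.mul hl).congr_right fun x => ?_⟩
  rw [zpow_add₀ (by positivity)]

lemma RapidDecay.mul (hφ : RapidDecay φ) (hψ : PolynomialGrowth ψ) :
    RapidDecay fun x => φ x * ψ x := by
  simpa only [smul_eq_mul, mul_comm] using hψ.smul_rapidDecay hφ

lemma RapidDecay.integrable [NormedSpace ℝ E] [FiniteDimensional ℝ E] [MeasurableSpace E]
    [BorelSpace E] {μ : Measure E} [μ.IsAddHaarMeasure] (hφ : RapidDecay φ)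
    (hφc : Continuous φ) : Integrable φ μ := by
  have h := integrable_one_add_norm (E := E) (μ := μ) (r := (finrank ℝ E + 1 : ℕ)) (by simp)
  refine IsBigO.integrable hφc.aestronglyMeasurable
    ((hφ (-(finrank ℝ E + 1 : ℕ))).congr_right fun x => ?_) h
  rw [← Real.rpow_intCast]
  norm_cast

end Decay

/-! ### Decay of radial subsolutions -/

/-- `f` is positive, vanishes at infinity and satisfies `f'' + (m / r) f' ≥ c² f` on `[R, ∞)`, where
`p = f'`: the comparison inequality for the profile of a radial function in dimension `m + 1`. -/
structure IsRadialSubsolution (m : ℕ) (c R : ℝ) (f p : ℝ → ℝ) : Prop where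
  radius_pos : 0 < R
  rate_pos : 0 < c
  pos : ∀ r ≥ R, 0 < f r
  tendsto_zero : Tendsto f atTop (𝓝 0)
  hasDerivAt : ∀ r ≥ R, HasDerivAt f (p r) r
  hasDerivAt_deriv : ∀ r ≥ R, ∃ q ≥ c ^ 2 * f r, HasDerivAt p (q - m * p r / r) r

lemma monotoneOn_Ici_of_hasDerivAt_nonneg {f : ℝ → ℝ} {R : ℝ}
    (hf : ∀ r ≥ R, ∃ f' ≥ 0, HasDerivAt f f' r) : MonotoneOn f (Ici R) := by
  refine monotoneOn_of_deriv_nonneg (convex_Ici R) (fun r hr => ?_) (fun r hr => ?_) fun r hr => ?_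
  · obtain ⟨f', -, h⟩ := hf r hr
    exact h.continuousAt.continuousWithinAt
  · obtain ⟨f', -, h⟩ := hf r (interior_subset hr)
    exact h.differentiableAt.differentiableWithinAt
  · obtain ⟨f', hf', h⟩ := hf r (interior_subset hr)
    rwa [h.deriv]

namespace IsRadialSubsolution

variable {m : ℕ} {c R : ℝ} {f p : ℝ → ℝ}

lemma monotoneOn_pow_mul (h : IsRadialSubsolution m c R f p) :
    MonotoneOn (fun r => r ^ m * p r) (Ici R) := by
  refine monotoneOn_Ici_of_hasDerivAt_nonneg fun r hr => ?_
  obtain ⟨q, hq, hp⟩ := h.hasDerivAt_deriv r hr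
  have hr0 : 0 < r := h.radius_pos.trans_le hr
  have hq0 : 0 ≤ q := le_trans (mul_nonneg (sq_nonneg c) (h.pos r hr).le) hq
  refine ⟨r ^ m * q, by positivity, ?_⟩
  refine ((hasDerivAt_pow m r).fun_mul hp).congr_deriv ?_
  rcases m with _ | m
  · simp
  · simp only [Nat.add_sub_cancel, pow_succ]
    field_simp
    ring

lemma deriv_nonpos (h : IsRadialSubsolution m c R f p) {r : ℝ} (hr : R ≤ r) :
    p r ≤ 0 := by
  by_contra! hpr
  have deriv_pos (s : ℝ) (hs : r ≤ s) : 0 ≤ p s := by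
    have hr0 : 0 < r := h.radius_pos.trans_le hr
    have hs0 : 0 < s := hr0.trans_le hs
    have := h.monotoneOn_pow_mul hr (hr.trans hs) hs
    exact (pos_of_mul_pos_right ((by positivity : 0 < r ^ m * p r).trans_le this)
      (by positivity)).le
  have mono : MonotoneOn f (Ici r) := monotoneOn_Ici_of_hasDerivAt_nonneg fun s hs =>
    ⟨p s, deriv_pos s hs, h.hasDerivAt s (hr.trans hs)⟩
  have : f r ≤ 0 := ge_of_tendsto h.tendsto_zero
    ((eventually_ge_atTop r).mono fun s hs => mono self_mem_Ici hs hs)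
  exact (h.pos r hr).not_ge this

lemma deriv_le_neg_mul (h : IsRadialSubsolution m c R f p) {r : ℝ} (hr : R ≤ r) :
    p r ≤ -c * f r := by
  have mono : MonotoneOn (fun s => exp (-c * s) * (p s + c * f s)) (Ici R) := by
    refine monotoneOn_Ici_of_hasDerivAt_nonneg fun s hs => ?_
    obtain ⟨q, hq, hp⟩ := h.hasDerivAt_deriv s hs
    have drag : m * p s / s ≤ 0 := div_nonpos_of_nonpos_of_nonneg
      (mul_nonpos_of_nonneg_of_nonpos m.cast_nonneg (h.deriv_nonpos hs))
      (h.radius_pos.trans_le hs).le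
    refine ⟨exp (-c * s) * (q - c ^ 2 * f s - m * p s / s), mul_nonneg (exp_nonneg _) (by linarith),
      ?_⟩
    refine (((hasDerivAt_id s).const_mul (-c)).exp.fun_mul
      (hp.fun_add ((h.hasDerivAt s hs).const_mul c))).congr_deriv ?_
    simp only [id, mul_one]
    ring
  have upper : Tendsto (fun s => exp (-c * s) * (c * f s)) atTop (𝓝 0) := by
    have exp_lim : Tendsto (fun s => exp (-c * s)) atTop (𝓝 0) :=
      tendsto_exp_atBot.comp (tendsto_id.const_mul_atTop_of_neg (neg_lt_zero.2 h.rate_pos))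
    simpa using exp_lim.mul (h.tendsto_zero.const_mul c)
  have : exp (-c * r) * (p r + c * f r) ≤ 0 := by
    refine ge_of_tendsto upper ((eventually_ge_atTop r).mono fun s hs => ?_)
    refine (mono hr (hr.trans hs) hs).trans ?_
    exact mul_le_mul_of_nonneg_left (by linarith [h.deriv_nonpos (hr.trans hs)]) (exp_nonneg _)
  linarith [nonpos_of_mul_nonpos_right this (exp_pos _)]

lemma le_exp_neg (h : IsRadialSubsolution m c R f p) {r : ℝ} (hr : R ≤ r) :
    f r ≤ f R * exp (c * R) * exp (-c * r) := by
  have mono : MonotoneOn (fun s => -(exp (c * s) * f s)) (Ici R) := by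
    refine monotoneOn_Ici_of_hasDerivAt_nonneg fun s hs => ?_
    refine ⟨exp (c * s) * (-c * f s - p s), mul_nonneg (exp_nonneg _)
      (by linarith [h.deriv_le_neg_mul hs]), ?_⟩
    refine (((hasDerivAt_id s).const_mul c).exp.fun_mul
      (h.hasDerivAt s hs)).fun_neg.congr_deriv ?_
    simp only [id, mul_one]
    ring
  have := mono self_mem_Ici hr hr
  rw [neg_mul, Real.exp_neg, ← div_eq_mul_inv, le_div_iff₀ (exp_pos _)]
  linarith

lemma abs_deriv_le (h : IsRadialSubsolution m c R f p) {r : ℝ} (hr : R + 1 ≤ r) :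
    |p r| ≤ f (r - 1) := by
  have hr' : R ≤ r - 1 := by linarith
  obtain ⟨s, hs, slope⟩ := exists_hasDerivAt_eq_slope f p (sub_one_lt r)
    (fun t ht => (h.hasDerivAt t (hr'.trans ht.1)).continuousAt.continuousWithinAt)
    fun t ht => h.hasDerivAt t (hr'.trans ht.1.le)
  have hRs : R ≤ s := hr'.trans hs.1.le
  have hs0 : 0 < s := h.radius_pos.trans_le hRs
  have hRr : R ≤ r := hRs.trans hs.2.le
  have deriv_le : p s ≤ p r := by
    have mono := h.monotoneOn_pow_mul hRs hRr hs.2.le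
    have pow_le : r ^ m * p r ≤ s ^ m * p r := mul_le_mul_of_nonpos_right
      (pow_le_pow_left₀ hs0.le hs.2.le m) (h.deriv_nonpos hRr)
    exact le_of_mul_le_mul_left (mono.trans pow_le) (by positivity)
  rw [abs_of_nonpos (h.deriv_nonpos hRr)]
  have := h.pos r hRr
  rw [sub_sub_cancel, div_one] at slope
  linarith

end IsRadialSubsolution

/-- The left-hand side is the derivative of `r ^ m * f r ^ 2`, with `a = f r`, `b = deriv f r`. -/
lemma norm_deriv_pow_mul_sq_le (m : ℕ) {r : ℝ} (hr : 1 ≤ r) (a b : ℝ) :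
    ‖m * r ^ (m - 1) * a ^ 2 + 2 * (r ^ m * (a * b))‖ ≤
      (m + 1) * (r ^ m * a ^ 2) + r ^ m * b ^ 2 := by
  have : 0 ≤ r := zero_le_one.trans hr
  have pow_le : r ^ (m - 1) ≤ r ^ m := pow_le_pow_right₀ hr (Nat.sub_le m 1)
  have young : |2 * (a * b)| ≤ a ^ 2 + b ^ 2 := by
    rw [abs_le]
    constructor <;> nlinarith [sq_nonneg (a - b), sq_nonneg (a + b)]
  calc ‖m * r ^ (m - 1) * a ^ 2 + 2 * (r ^ m * (a * b))‖
      ≤ m * r ^ (m - 1) * a ^ 2 + r ^ m * |2 * (a * b)| := by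
        refine (norm_add_le _ _).trans_eq ?_
        rw [Real.norm_of_nonneg (by positivity), mul_left_comm, norm_mul,
          Real.norm_of_nonneg (by positivity), Real.norm_eq_abs]
    _ ≤ m * r ^ m * a ^ 2 + r ^ m * (a ^ 2 + b ^ 2) := by gcongr
    _ = (m + 1) * (r ^ m * a ^ 2) + r ^ m * b ^ 2 := by ring

lemma tendsto_zero_of_integrableOn_pow_mul_sq {m : ℕ} {f : ℝ → ℝ}
    (hf : Differentiable ℝ f) (hf2 : IntegrableOn (fun r => r ^ m * f r ^ 2) (Ioi 0))
    (hf'2 : IntegrableOn (fun r => r ^ m * deriv f r ^ 2) (Ioi 0)) :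
    Tendsto f atTop (𝓝 0) := by
  have hasDerivAt (r : ℝ) : HasDerivAt (fun s => s ^ m * f s ^ 2)
      (m * r ^ (m - 1) * f r ^ 2 + 2 * (r ^ m * (f r * deriv f r))) r := by
    refine ((hasDerivAt_pow m r).fun_mul ((hf r).hasDerivAt.fun_pow 2)).congr_deriv ?_
    push_cast
    ring
  have integrable_deriv : IntegrableOn
      (fun r => m * r ^ (m - 1) * f r ^ 2 + 2 * (r ^ m * (f r * deriv f r))) (Ioi 1) := by
    have dominating : IntegrableOn
        (fun r => (m + 1) * (r ^ m * f r ^ 2) + r ^ m * deriv f r ^ 2) (Ioi 1) :=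
      IntegrableOn.mono_set (hf2.const_mul (m + 1 : ℝ) |>.add hf'2) (Ioi_subset_Ioi zero_le_one)
    have measurable_f := hf.continuous.measurable
    have := measurable_deriv f
    exact dominating.mono' (Measurable.aestronglyMeasurable (by fun_prop))
      ((ae_restrict_mem measurableSet_Ioi).mono fun r hr =>
        norm_deriv_pow_mul_sq_le m (mem_Ioi.1 hr).le _ _)
  have weighted_limit := tendsto_zero_of_hasDerivAt_of_integrableOn_Ioi
    (fun r _ => hasDerivAt r) integrable_deriv (hf2.mono_set (Ioi_subset_Ioi zero_le_one))
  have sq_limit : Tendsto (fun r => f r ^ 2) atTop (𝓝 0) := by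
    refine squeeze_zero' (.of_forall fun r => sq_nonneg _) ?_ weighted_limit
    filter_upwards [eventually_ge_atTop 1] with r hr
    exact le_mul_of_one_le_left (sq_nonneg _) (one_le_pow₀ hr)
  have abs_limit := (Real.continuous_sqrt.tendsto 0).comp sq_limit
  simp only [Function.comp_def, Real.sqrt_sq_eq_abs, Real.sqrt_zero] at abs_limit
  exact (tendsto_zero_iff_abs_tendsto_zero f).2 abs_limit

namespace IsRadial

variable {E : Type*} [NormedAddCommGroup E] [InnerProductSpace ℝ E] {f : E → ℝ} {e : E}

lemma eq_norm_smul (hf : IsRadial f) (he : ‖e‖ = 1) (x : E) : f x = f (‖x‖ • e) :=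
  hf _ _ (by rw [norm_smul, norm_norm, he, mul_one])

lemma norm_fderiv (hf : IsRadial f) (hfd : Differentiable ℝ f) (he : ‖e‖ = 1) (x : E) :
    ‖fderiv ℝ f x‖ = |fderiv ℝ f (‖x‖ • e) e| := by
  rcases eq_or_ne x 0 with rfl | hx
  · have fderiv_zero : fderiv ℝ f 0 = 0 :=
      ContinuousLinearMap.ext fun v => hf.fderiv_apply_eq_zero hfd (inner_zero_left v)
    simp [fderiv_zero]
  · refine mul_left_cancel₀ (norm_ne_zero_iff.2 hx) ?_
    rw [hf.norm_mul_norm_fderiv hfd, (hf.fderiv_apply_self hfd).eq_norm_smul he x, map_smul,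
      smul_eq_mul, abs_mul, abs_norm]

variable [FiniteDimensional ℝ E]

lemma hasDerivAt_fderiv_smul (hf : IsRadial f) (hfs : ContDiff ℝ 2 f) (he : ‖e‖ = 1) {r : ℝ}
    (hr : r ≠ 0) : HasDerivAt (fun s : ℝ => fderiv ℝ f (s • e) e)
      (Δ f (r • e) - (finrank ℝ E - 1 : ℕ) * fderiv ℝ f (r • e) e / r) r := by
  refine (hasDerivAt_comp_smul_const ((contDiff_fderiv_apply hfs e).differentiable one_ne_zero)
    e r).congr_deriv ?_
  have : Nontrivial E := ⟨e, 0, norm_ne_zero_iff.1 (by simp [he])⟩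
  have radial := hf.fderiv_fderiv_apply_self hfs (r • e) e
  rw [map_smul, smul_eq_mul, real_inner_smul_left, real_inner_self_eq_norm_sq, he] at radial
  rw [Nat.cast_pred finrank_pos]
  field_simp
  linarith

lemma tendsto_cocompact_zero [Nontrivial E] [MeasurableSpace E] [BorelSpace E] {μ : Measure E}
    [μ.IsAddHaarMeasure] (hf : IsRadial f) (hfd : Differentiable ℝ f)
    (hf2 : Integrable (fun x => f x ^ 2) μ) (hf'2 : Integrable (fun x => ‖∇ f x‖ ^ 2) μ) :
    Tendsto f (cocompact E) (𝓝 0) := by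
  obtain ⟨e, he⟩ := exists_norm_eq E zero_le_one
  have profile_deriv (r : ℝ) := hasDerivAt_comp_smul_const hfd e r
  have profile_tendsto : Tendsto (fun r : ℝ => f (r • e)) atTop (𝓝 0) := by
    refine tendsto_zero_of_integrableOn_pow_mul_sq (m := finrank ℝ E - 1)
      (fun r => (profile_deriv r).differentiableAt) ?_ ?_
    · refine (integrable_fun_norm_addHaar μ (f := fun r => f (r • e) ^ 2)).1 ?_
      simpa only [← hf.eq_norm_smul he] using hf2
    · simp_rw [norm_gradient_eq_norm_fderiv, hf.norm_fderiv hfd he, sq_abs] at hf'2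
      simp_rw [(profile_deriv _).deriv]
      exact (integrable_fun_norm_addHaar μ (f := fun r => fderiv ℝ f (r • e) e ^ 2)).1 hf'2
  exact (profile_tendsto.comp tendsto_norm_cocompact_atTop).congr fun x =>
    (hf.eq_norm_smul he x).symm

lemma exists_isRadialSubsolution (hf : IsRadial f) (hfs : ContDiff ℝ 2 f) (hpos : ∀ x, 0 < f x)
    (hlim : Tendsto f (cocompact E) (𝓝 0)) {c : ℝ} (hc : 0 < c)
    (hΔ : ∀ᶠ x in cocompact E, c ^ 2 * f x ≤ Δ f x) (he : ‖e‖ = 1) :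
    ∃ R, IsRadialSubsolution (finrank ℝ E - 1) c R (fun r => f (r • e))
      fun r => fderiv ℝ f (r • e) e := by
  have ray_tendsto : Tendsto (fun r : ℝ => r • e) atTop (cocompact E) := by
    refine tendsto_cocompact_of_tendsto_dist_comp_atTop 0 ?_
    simpa [norm_smul, he] using tendsto_abs_atTop_atTop
  obtain ⟨R, hR⟩ := eventually_atTop.1 ((ray_tendsto.eventually hΔ).and (eventually_gt_atTop 0))
  exact ⟨R, {
    radius_pos := (hR R le_rfl).2
    rate_pos := hc
    pos := fun r _ => hpos _
    tendsto_zero := hlim.comp ray_tendsto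
    hasDerivAt := fun r _ => hasDerivAt_comp_smul_const (hfs.differentiable two_ne_zero) e r
    hasDerivAt_deriv := fun r hr =>
      ⟨Δ f (r • e), (hR r hr).1, hf.hasDerivAt_fderiv_smul hfs he (hR r hr).2.ne'⟩ }⟩

lemma rapidDecay_of_le_laplacian [Nontrivial E] (hf : IsRadial f) (hfs : ContDiff ℝ 2 f)
    (hpos : ∀ x, 0 < f x) (hlim : Tendsto f (cocompact E) (𝓝 0)) {c : ℝ} (hc : 0 < c)
    (hΔ : ∀ᶠ x in cocompact E, c ^ 2 * f x ≤ Δ f x) :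
    RapidDecay f ∧ RapidDecay (fderiv ℝ f) := by
  obtain ⟨e, he⟩ := exists_norm_eq E zero_le_one
  obtain ⟨R, h⟩ := hf.exists_isRadialSubsolution hfs hpos hlim hc hΔ he
  have norm_large (s : ℝ) := tendsto_norm_cocompact_atTop (E := E).eventually_ge_atTop s
  refine ⟨rapidDecay_of_isBigO_exp_neg hfs.continuous hc ?_,
    rapidDecay_of_isBigO_exp_neg (hfs.continuous_fderiv two_ne_zero) hc ?_⟩
  · refine .of_bound (f (R • e) * exp (c * R)) ((norm_large R).mono fun x hx => ?_)
    rw [Real.norm_of_nonneg (hpos x).le, Real.norm_of_nonneg (exp_nonneg _), hf.eq_norm_smul he x]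
    exact h.le_exp_neg hx
  · refine .of_bound (f (R • e) * exp (c * R) * exp c) ((norm_large (R + 1)).mono fun x hx => ?_)
    rw [hf.norm_fderiv (hfs.differentiable two_ne_zero) he, Real.norm_of_nonneg (exp_nonneg _)]
    refine (h.abs_deriv_le hx).trans ((h.le_exp_neg (by linarith)).trans_eq ?_)
    rw [mul_assoc _ (exp c), ← Real.exp_add]
    ring_nf

end IsRadial

section Schrodinger

variable {E : Type*} [NormedAddCommGroup E] [InnerProductSpace ℝ E] [FiniteDimensional ℝ E]
  [MeasurableSpace E] [BorelSpace E] {μ : Measure E} [μ.IsAddHaarMeasure] {V u φ : E → ℝ}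

theorem integral_mul_schrodinger_eq (hu : ContDiff ℝ 2 u) (hφ : ContDiff ℝ 2 φ)
    (hV : Continuous V) (hV_growth : PolynomialGrowth V) (hu_decay : RapidDecay u)
    (hu'_decay : RapidDecay (fderiv ℝ u)) (hΔu_decay : RapidDecay (Δ u))
    (hφ_growth : PolynomialGrowth φ) (hΔφ_growth : PolynomialGrowth (Δ φ)) :
    ∫ x, u x * (-Δ φ x + V x * φ x) ∂μ = ∫ x, (-Δ u x + V x * u x) * φ x ∂μ := by
  have hu_cont := hu.continuous
  have hφ_cont := hφ.continuous
  have hΔu_cont := continuous_laplacian hu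
  have hΔφ_cont := continuous_laplacian hφ
  have integrable_mul : Integrable (fun x => u x * φ x) μ :=
    (hu_decay.mul hφ_growth).integrable (by fun_prop)
  have integrable_gradient_mul : Integrable (fun x => ‖∇ u x‖ * φ x) μ := by
    simp_rw [norm_gradient_eq_norm_fderiv]
    exact (hu'_decay.norm.mul hφ_growth).integrable
      ((hu.continuous_fderiv two_ne_zero).norm.mul hφ_cont)
  have integrable_mul_laplacian : Integrable (fun x => u x * Δ φ x) μ :=
    (hu_decay.mul hΔφ_growth).integrable (by fun_prop)
  have integrable_laplacian_mul : Integrable (fun x => Δ u x * φ x) μ :=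
    (hΔu_decay.mul hφ_growth).integrable (by fun_prop)
  have integrable_potential : Integrable (fun x => u x * (V x * φ x)) μ :=
    (hu_decay.mul (hV_growth.mul hφ_growth)).integrable (by fun_prop)
  have green := integral_mul_laplacian_eq hu hφ integrable_mul integrable_gradient_mul
    integrable_mul_laplacian integrable_laplacian_mul
  calc ∫ x, u x * (-Δ φ x + V x * φ x) ∂μ
      = ∫ x, (u x * (V x * φ x) - u x * Δ φ x) ∂μ := by congr! 2 with x; ring
    _ = ∫ x, (u x * (V x * φ x) - Δ u x * φ x) ∂μ := by
        rw [integral_sub integrable_potential integrable_mul_laplacian, green,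
          integral_sub integrable_potential integrable_laplacian_mul]
    _ = ∫ x, (-Δ u x + V x * u x) * φ x ∂μ := by congr! 2 with x; ring

end Schrodinger

/-! ### The linearized operator at the ground state -/

section GroundState

lemma lap_eq_laplacian {f : R2 → ℝ} (hf : ContDiff ℝ 2 f) (x : R2) : lap f x = Δ f x := by
  rw [laplacian_eq_sum_fderiv_fderiv (EuclideanSpace.basisFun (Fin 2) ℝ) hf]
  simp only [lap, EuclideanSpace.basisFun_apply]

lemma Lop_eq_laplacian (w : R2 → ℝ) {f : R2 → ℝ} (hf : ContDiff ℝ 2 f) (x : R2) :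
    Lop w f x = -Δ f x + (1 - 3 * w x ^ 2) * f x := by
  rw [Lop, lap_eq_laplacian hf]

lemma xgrad_eq_fderiv (f : R2 → ℝ) : xgrad f = fun x => fderiv ℝ f x x :=
  funext fun _ => inner_gradient_right

/-- The function `ψ₂ = -(1/2)(w + x·∇w)`: minus the derivative at `s = 1` of the family
`√s w(√s x)`. -/
def psi₂ (w : R2 → ℝ) (x : R2) : ℝ := -(1 / 2) * (w x + xgrad w x)

/-- Half the second derivative at `s = 1` of the family `√s w(√s x)`, written without derivatives
of `w` by means of `Δw = w - w³`. It is an explicit solution of the equation of `ψ₄`. -/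
def psi₄ (w : R2 → ℝ) (x : R2) : ℝ := (‖x‖ ^ 2 * (w x - w x ^ 3) - w x) / 8

lemma BddFun.polynomialGrowth {f : R2 → ℝ} (hf : BddFun f) : PolynomialGrowth f :=
  let ⟨M, hM⟩ := hf
  ⟨0, Asymptotics.isBigO_of_le' (c := M) _ fun x => by simpa using hM x⟩

namespace IsGroundState

variable {w : R2 → ℝ}

lemma isRadial (hw : IsGroundState w) : IsRadial w := hw.radial

lemma differentiable (hw : IsGroundState w) : Differentiable ℝ w :=
  hw.smooth.differentiable two_ne_zero

lemma laplacian_eq (hw : IsGroundState w) (x : R2) : Δ w x = w x - w x ^ 3 := by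
  rw [← lap_eq_laplacian hw.smooth]
  linarith [hw.eqn x]

lemma hasFDerivAt_xgrad (hw : IsGroundState w) (x : R2) :
    HasFDerivAt (xgrad w) ((w x - w x ^ 3) • innerSL ℝ x) x := by
  have h := hw.isRadial.hasFDerivAt_fderiv_apply_self hw.smooth x
  rw [xgrad_eq_fderiv]
  simpa [hw.laplacian_eq] using h

lemma contDiff_xgrad (hw : IsGroundState w) : ContDiff ℝ 2 (xgrad w) :=
  contDiff_two_of_hasFDerivAt_smul_innerSL hw.hasFDerivAt_xgrad
    ((hw.smooth.sub (hw.smooth.pow 3)).of_le one_le_two)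

lemma laplacian_xgrad (hw : IsGroundState w) (x : R2) :
    Δ (xgrad w) x = (1 - 3 * w x ^ 2) * xgrad w x + 2 * (w x - w x ^ 3) := by
  rw [laplacian_of_hasFDerivAt_smul_innerSL hw.hasFDerivAt_xgrad
    ((hw.smooth.sub (hw.smooth.pow 3)).of_le one_le_two),
    (hasFDerivAt_sub_pow_three (hw.differentiable x)).fderiv]
  simp [xgrad_eq_fderiv]

lemma hasFDerivAt_norm_sq_mul_sub_pow_three (hw : IsGroundState w) (x : R2) :
    HasFDerivAt (fun y => ‖y‖ ^ 2 * (w y - w y ^ 3)) (Δ (xgrad w) x • innerSL ℝ x) x := by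
  refine ((hasStrictFDerivAt_norm_sq x).hasFDerivAt.fun_mul
    (hasFDerivAt_sub_pow_three (hw.differentiable x))).congr_fderiv ?_
  ext v
  have radial := hw.isRadial.inner_mul_fderiv_apply hw.differentiable x x v
  rw [real_inner_self_eq_norm_sq] at radial
  rw [hw.laplacian_xgrad, xgrad_eq_fderiv]
  simp only [add_apply, smul_apply, smul_eq_mul, coe_innerSL_apply, nsmul_eq_mul, Nat.cast_ofNat]
  linear_combination (1 - 3 * w x ^ 2) * radial

lemma contDiff_norm_sq_mul_sub_pow_three (hw : IsGroundState w) :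
    ContDiff ℝ 2 fun y => ‖y‖ ^ 2 * (w y - w y ^ 3) :=
  (contDiff_norm_sq ℝ).mul (hw.smooth.sub (hw.smooth.pow 3))

lemma laplacian_norm_sq_mul_sub_pow_three (hw : IsGroundState w) (x : R2) :
    Δ (fun y => ‖y‖ ^ 2 * (w y - w y ^ 3)) x =
      (1 - 3 * w x ^ 2) * (‖x‖ ^ 2 * (w x - w x ^ 3)) - 6 * w x * xgrad w x ^ 2 +
        4 * (1 - 3 * w x ^ 2) * xgrad w x + 4 * (w x - w x ^ 3) := by
  have hΔ : Δ (xgrad w) = fun y => (1 - 3 * w y ^ 2) * xgrad w y + 2 * (w y - w y ^ 3) :=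
    funext hw.laplacian_xgrad
  have hw1 : ContDiff ℝ 1 w := hw.smooth.of_le one_le_two
  have hΔ1 : ContDiff ℝ 1 (Δ (xgrad w)) := by
    have := hw.contDiff_xgrad.of_le one_le_two
    rw [hΔ]
    fun_prop
  rw [laplacian_of_hasFDerivAt_smul_innerSL hw.hasFDerivAt_norm_sq_mul_sub_pow_three hΔ1]
  have hw' := (hw.differentiable x).hasFDerivAt
  have hΔ' := ((hw'.pow 2).const_mul 3 |>.const_sub 1).fun_mul (hw.hasFDerivAt_xgrad x)
    |>.fun_add ((hasFDerivAt_sub_pow_three (hw.differentiable x)).const_mul 2)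
  rw [← hΔ] at hΔ'
  rw [hΔ'.fderiv, hw.laplacian_xgrad]
  simp only [xgrad_eq_fderiv, Nat.add_one_sub_one, pow_one, nsmul_eq_mul, Nat.cast_ofNat, smul_neg,
    add_apply, smul_apply, coe_innerSL_apply, inner_self_eq_norm_sq_to_K, ringHom_apply,
    smul_eq_mul, neg_apply, finrank_euclideanSpace, Fintype.card_fin]
  ring

lemma contDiff_psi₂ (hw : IsGroundState w) : ContDiff ℝ 2 (psi₂ w) :=
  contDiff_const.mul (hw.smooth.add hw.contDiff_xgrad)

lemma contDiff_psi₄ (hw : IsGroundState w) : ContDiff ℝ 2 (psi₄ w) :=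
  (hw.contDiff_norm_sq_mul_sub_pow_three.sub hw.smooth).div_const 8

lemma laplacian_psi₂ (hw : IsGroundState w) (x : R2) :
    Δ (psi₂ w) x = -(1 / 2) * (Δ w x + Δ (xgrad w) x) := by
  have hpsi₂ : psi₂ w = (-(1 / 2) : ℝ) • (w + xgrad w) := rfl
  have h₁ := hw.smooth.contDiffAt (x := x)
  have h₂ := hw.contDiff_xgrad.contDiffAt (x := x)
  rw [hpsi₂, laplacian_smul _ (f := w + xgrad w) (h₁.add h₂), h₁.laplacian_add h₂, smul_eq_mul]

lemma laplacian_psi₄ (hw : IsGroundState w) (x : R2) :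
    Δ (psi₄ w) x = (Δ (fun y => ‖y‖ ^ 2 * (w y - w y ^ 3)) x - Δ w x) / 8 := by
  have hpsi₄ : psi₄ w = (8⁻¹ : ℝ) • ((fun y => ‖y‖ ^ 2 * (w y - w y ^ 3)) - w) := by
    funext y
    simp [psi₄, div_eq_inv_mul]
  have h₁ := hw.contDiff_norm_sq_mul_sub_pow_three.contDiffAt (x := x)
  have h₂ := hw.smooth.contDiffAt (x := x)
  rw [hpsi₄, laplacian_smul _ (f := (fun y => ‖y‖ ^ 2 * (w y - w y ^ 3)) - w) (h₁.sub h₂),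
    h₁.laplacian_sub h₂, smul_eq_mul, inv_mul_eq_div]

lemma Lop_psi₂ (hw : IsGroundState w) (x : R2) : Lop w (psi₂ w) x = w x := by
  rw [Lop_eq_laplacian w hw.contDiff_psi₂, hw.laplacian_psi₂, hw.laplacian_eq, hw.laplacian_xgrad,
    psi₂]
  ring

lemma Lop_psi₄ (hw : IsGroundState w) (x : R2) :
    Lop w (psi₄ w) x = 3 * w x * psi₂ w x ^ 2 + psi₂ w x := by
  rw [Lop_eq_laplacian w hw.contDiff_psi₄, hw.laplacian_psi₄, hw.laplacian_eq,
    hw.laplacian_norm_sq_mul_sub_pow_three, psi₂, psi₄]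
  ring

lemma rapidDecay_and_rapidDecay_fderiv (hw : IsGroundState w) :
    RapidDecay w ∧ RapidDecay (fderiv ℝ w) := by
  have tendsto_zero : Tendsto w (cocompact R2) (𝓝 0) :=
    hw.isRadial.tendsto_cocompact_zero hw.differentiable hw.sqInt hw.gradSqInt
  refine hw.isRadial.rapidDecay_of_le_laplacian hw.smooth hw.pos tendsto_zero
    (c := 1 / 2) (by norm_num) ?_
  filter_upwards [tendsto_zero.eventually_le_const (by norm_num : (0 : ℝ) < 1 / 2)] with x hx
  rw [hw.laplacian_eq]
  nlinarith [hw.pos x, mul_nonneg (hw.pos x).le (hw.pos x).le]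

lemma rapidDecay (hw : IsGroundState w) : RapidDecay w := hw.rapidDecay_and_rapidDecay_fderiv.1

lemma rapidDecay_fderiv (hw : IsGroundState w) : RapidDecay (fderiv ℝ w) :=
  hw.rapidDecay_and_rapidDecay_fderiv.2

lemma rapidDecay_sub_pow_three (hw : IsGroundState w) : RapidDecay fun x => w x - w x ^ 3 := by
  have hw3 := hw.rapidDecay.mul (hw.rapidDecay.mul hw.rapidDecay.polynomialGrowth).polynomialGrowth
  simpa only [pow_three] using hw.rapidDecay.sub hw3

lemma rapidDecay_xgrad (hw : IsGroundState w) : RapidDecay (xgrad w) :=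
  xgrad_eq_fderiv w ▸ hw.rapidDecay_fderiv.apply_self

lemma rapidDecay_fderiv_xgrad (hw : IsGroundState w) : RapidDecay (fderiv ℝ (xgrad w)) := by
  refine (polynomialGrowth_id.norm.smul_rapidDecay hw.rapidDecay_sub_pow_three).of_isBigO
    (Asymptotics.isBigO_of_le _ fun x => ?_)
  rw [(hw.hasFDerivAt_xgrad x).fderiv, norm_smul, norm_smul, norm_norm, innerSL_apply_norm,
    mul_comm]

lemma rapidDecay_psi₂ (hw : IsGroundState w) : RapidDecay (psi₂ w) :=
  (polynomialGrowth_const _).smul_rapidDecay (hw.rapidDecay.add hw.rapidDecay_xgrad)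

lemma rapidDecay_fderiv_psi₂ (hw : IsGroundState w) : RapidDecay (fderiv ℝ (psi₂ w)) := by
  have fderiv_psi₂ : fderiv ℝ (psi₂ w) =
      fun x => (-(1 / 2) : ℝ) • (fderiv ℝ w x + fderiv ℝ (xgrad w) x) :=
    funext fun x => (((hw.differentiable x).hasFDerivAt.add
      (hw.hasFDerivAt_xgrad x).differentiableAt.hasFDerivAt).const_mul _).fderiv
  rw [fderiv_psi₂]
  exact (polynomialGrowth_const _).smul_rapidDecay
    (hw.rapidDecay_fderiv.add hw.rapidDecay_fderiv_xgrad)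

lemma rapidDecay_psi₄ (hw : IsGroundState w) : RapidDecay (psi₄ w) := by
  have norm_sq : PolynomialGrowth fun x : R2 => ‖x‖ ^ 2 := by
    simpa only [sq] using polynomialGrowth_id.norm.mul polynomialGrowth_id.norm
  exact ((norm_sq.smul_rapidDecay hw.rapidDecay_sub_pow_three).sub hw.rapidDecay).mul
    (polynomialGrowth_const 8⁻¹)

lemma polynomialGrowth_potential (hw : IsGroundState w) :
    PolynomialGrowth fun x => 1 - 3 * w x ^ 2 := by
  have hw2 := (hw.rapidDecay.mul hw.rapidDecay.polynomialGrowth).polynomialGrowth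
  simpa only [sq] using (polynomialGrowth_const 1).sub ((polynomialGrowth_const 3).mul hw2)

lemma integral_mul_eq_integral_psi₂_mul_Lop (hw : IsGroundState w) {φ : R2 → ℝ}
    (hφ : ContDiff ℝ 2 φ)
    (hφ_growth : PolynomialGrowth φ) (hLφ_growth : PolynomialGrowth (Lop w φ)) :
    ∫ x, w x * φ x = ∫ x, psi₂ w x * Lop w φ x := by
  have hw_cont := hw.smooth.continuous
  have hV := hw.polynomialGrowth_potential
  have laplacian_psi₂_eq : Δ (psi₂ w) = fun x => psi₂ w x * (1 - 3 * w x ^ 2) - w x := by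
    funext x
    linarith [hw.Lop_psi₂ x, Lop_eq_laplacian w hw.contDiff_psi₂ x]
  have laplacian_φ_eq : Δ φ = fun x => (1 - 3 * w x ^ 2) * φ x - Lop w φ x := by
    funext x
    linarith [Lop_eq_laplacian w hφ x]
  have symm := integral_mul_schrodinger_eq (μ := volume) hw.contDiff_psi₂ hφ (by fun_prop) hV
    hw.rapidDecay_psi₂ hw.rapidDecay_fderiv_psi₂
    (laplacian_psi₂_eq ▸ (hw.rapidDecay_psi₂.mul hV).sub hw.rapidDecay) hφ_growth
    (laplacian_φ_eq ▸ (hV.mul hφ_growth).sub hLφ_growth)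
  simp only [← Lop_eq_laplacian w hφ, ← Lop_eq_laplacian w hw.contDiff_psi₂, hw.Lop_psi₂] at symm
  exact symm.symm

lemma polynomialGrowth_source (hw : IsGroundState w) :
    PolynomialGrowth fun x => 3 * w x * psi₂ w x ^ 2 + psi₂ w x := by
  have hψ := hw.rapidDecay_psi₂
  have hwψ := (hw.rapidDecay.mul (polynomialGrowth_const 3)).mul
    (hψ.mul hψ.polynomialGrowth).polynomialGrowth
  simpa only [sq, mul_comm (3 : ℝ)] using (hwψ.add hψ).polynomialGrowth

lemma hasFDerivAt_mul_xgrad (hw : IsGroundState w) (x : R2) :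
    HasFDerivAt (fun y => w y * xgrad w y)
      (w x • fderiv ℝ (xgrad w) x + xgrad w x • fderiv ℝ w x) x :=
  (hw.differentiable x).hasFDerivAt.fun_mul
    (hw.hasFDerivAt_xgrad x).differentiableAt.hasFDerivAt

lemma rapidDecay_mul_xgrad (hw : IsGroundState w) : RapidDecay fun x => w x * xgrad w x :=
  hw.rapidDecay.mul hw.rapidDecay_xgrad.polynomialGrowth

lemma rapidDecay_fderiv_mul_xgrad (hw : IsGroundState w) :
    RapidDecay (fderiv ℝ fun x => w x * xgrad w x) := by
  simp_rw [funext fun x => (hw.hasFDerivAt_mul_xgrad x).fderiv]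
  exact (hw.rapidDecay.polynomialGrowth.smul_rapidDecay hw.rapidDecay_fderiv_xgrad).add
    (hw.rapidDecay_xgrad.polynomialGrowth.smul_rapidDecay hw.rapidDecay_fderiv)

lemma integrable_fderiv_mul_xgrad_apply_self (hw : IsGroundState w) :
    Integrable fun x => fderiv ℝ (fun y => w y * xgrad w y) x x := by
  have hu : ContDiff ℝ 2 fun x => w x * xgrad w x := hw.smooth.mul hw.contDiff_xgrad
  exact hw.rapidDecay_fderiv_mul_xgrad.apply_self.integrable
    ((hu.continuous_fderiv two_ne_zero).clm_apply continuous_id)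

lemma integral_fderiv_mul_xgrad_apply_self (hw : IsGroundState w) :
    ∫ x, fderiv ℝ (fun y => w y * xgrad w y) x x = -(2 * ∫ x, w x * xgrad w x) := by
  have hu : ContDiff ℝ 2 fun x => w x * xgrad w x := hw.smooth.mul hw.contDiff_xgrad
  have hu_cont := hu.continuous
  have hu'_cont := hu.continuous_fderiv two_ne_zero
  have norm_growth : PolynomialGrowth fun x : R2 => ‖x‖ := polynomialGrowth_id.norm
  have h := integral_fderiv_apply_self (μ := volume) (hu.differentiable two_ne_zero)
    (hw.rapidDecay_mul_xgrad.integrable hu_cont)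
    ((norm_growth.smul_rapidDecay hw.rapidDecay_mul_xgrad).integrable (by fun_prop))
    ((norm_growth.smul_rapidDecay hw.rapidDecay_fderiv_mul_xgrad.norm).integrable (by fun_prop))
  simpa using h

lemma integral_mul_psi₄_add_psi₂_sq (hw : IsGroundState w) :
    ∫ x, (2 * w x * psi₄ w x + psi₂ w x ^ 2) = 0 := by
  have divergence_form (x : R2) : 2 * w x * psi₄ w x + psi₂ w x ^ 2 =
      4⁻¹ * (fderiv ℝ (fun y => w y * xgrad w y) x x + 2 * (w x * xgrad w x)) := by
    rw [(hw.hasFDerivAt_mul_xgrad x).fderiv, (hw.hasFDerivAt_xgrad x).fderiv]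
    simp only [psi₂, psi₄, xgrad_eq_fderiv, add_apply, smul_apply, coe_innerSL_apply,
      inner_self_eq_norm_sq_to_K, ringHom_apply, smul_eq_mul]
    ring
  have hu : ContDiff ℝ 2 fun x => w x * xgrad w x := hw.smooth.mul hw.contDiff_xgrad
  simp_rw [divergence_form]
  rw [integral_const_mul, integral_add hw.integrable_fderiv_mul_xgrad_apply_self
    ((hw.rapidDecay_mul_xgrad.integrable hu.continuous).const_mul 2), integral_const_mul,
    hw.integral_fderiv_mul_xgrad_apply_self]
  ring

lemma integrable_mul (hw : IsGroundState w) {φ : R2 → ℝ} (hφ : Continuous φ)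
    (hφ_growth : PolynomialGrowth φ) :
    Integrable fun x => w x * φ x :=
  (hw.rapidDecay.mul hφ_growth).integrable (hw.smooth.continuous.mul hφ)

lemma integrable_psi₂_sq (hw : IsGroundState w) : Integrable fun x => psi₂ w x ^ 2 := by
  have hψ := hw.rapidDecay_psi₂
  refine RapidDecay.integrable ?_ (hw.contDiff_psi₂.continuous.pow 2)
  simpa only [sq] using hψ.mul hψ.polynomialGrowth

end IsGroundState

theorem identity_I_vanishes_general {w ψ : R2 → ℝ} (hw : IsGroundState w) (hψ : ContDiff ℝ 2 ψ)
    (hψ_growth : PolynomialGrowth ψ)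
    (hLψ : ∀ x, Lop w ψ x = 3 * w x * psi₂ w x ^ 2 + psi₂ w x) :
    Integrable (fun x => 2 * w x * ψ x + psi₂ w x ^ 2) ∧
      ∫ x, (2 * w x * ψ x + psi₂ w x ^ 2) = 0 := by
  have hLψ_growth : PolynomialGrowth (Lop w ψ) := funext hLψ ▸ hw.polynomialGrowth_source
  have hLψ₄_growth : PolynomialGrowth (Lop w (psi₄ w)) :=
    funext hw.Lop_psi₄ ▸ hw.polynomialGrowth_source
  have hψ₄_growth := hw.rapidDecay_psi₄.polynomialGrowth
  have pairing_eq : ∫ x, w x * ψ x = ∫ x, w x * psi₄ w x := by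
    rw [hw.integral_mul_eq_integral_psi₂_mul_Lop hψ hψ_growth hLψ_growth,
      hw.integral_mul_eq_integral_psi₂_mul_Lop hw.contDiff_psi₄ hψ₄_growth hLψ₄_growth]
    simp only [hLψ, hw.Lop_psi₄]
  have hwψ := (hw.integrable_mul hψ.continuous hψ_growth).const_mul 2
  have hwψ₄ := (hw.integrable_mul hw.contDiff_psi₄.continuous hψ₄_growth).const_mul 2
  have explicit := hw.integral_mul_psi₄_add_psi₂_sq
  simp only [mul_assoc] at explicit ⊢
  refine ⟨hwψ.add hw.integrable_psi₂_sq, ?_⟩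
  rwa [integral_add hwψ hw.integrable_psi₂_sq, integral_const_mul, pairing_eq,
    ← integral_const_mul, ← integral_add hwψ₄ hw.integrable_psi₂_sq]

end GroundState

/-- Lemma 3.3, identity `I = 0`: `∫ (2wψ₄ + ψ₂²) = 0`. -/
theorem identity_I_vanishes
    (w : R2 → ℝ) (hw : IsGroundState w)
    -- `ψ₂ = -(1/2)(w + x·∇w)`
    (ψ2 : R2 → ℝ) (hψ2 : ∀ x, ψ2 x = -(1 / 2) * (w x + xgrad w x))
    -- `ψ₄`: the unique bounded solution of `∇ψ₄(0)=0`, `Lψ₄ = 3wψ₂² + ψ₂`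
    (ψ4 : R2 → ℝ)
    (hψ4s : ContDiff ℝ 2 ψ4) (hψ4b : BddFun ψ4) (hψ4g : gradient ψ4 0 = 0)
    (hψ4e : ∀ x, Lop w ψ4 x = 3 * w x * (ψ2 x) ^ 2 + ψ2 x)
    (hint : Integrable fun x => 2 * w x * ψ4 x + (ψ2 x) ^ 2) :
    (∫ x, (2 * w x * ψ4 x + (ψ2 x) ^ 2)) = 0 := by
  obtain rfl : ψ2 = psi₂ w := funext hψ2
  exact (identity_I_vanishes_general hw hψ4s hψ4b.polynomialGrowth hψ4e).2
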